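/- arXiv:1503.05770 — 9 statements merged into one kernel-verified Lean document; each statement's English description precedes it below -/
import Mathlib

section
/- For every point p of the closed long ray, the closed tail {x : p ≤ x} is a closed, sequentially compact subset that is not compact. Consequently the long ray is not a ⊠-space, i.e. it has a closed sequentially compact subset which fails to be compact. -/
/-- The closed long ray: `ω₁ × [0,1)` with the lexicographic order
(`ω₁` being the first uncountable ordinal), equipped with the order topology. -/
abbrev LongRay : Type 1 :=
  {o : Ordinal // o < Ordinal.omega 1} ×ₗ ↥(Set.Ico (0 : ℝ) 1)

noncomputable instance : TopologicalSpace LongRay := Preorder.topology LongRay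

instance : OrderTopology LongRay := ⟨rfl⟩

theorem longRay_lt_iff (x y : LongRay) : x < y ↔ (ofLex x).1 < (ofLex y).1 ∨
    ((ofLex x).1 = (ofLex y).1 ∧ (ofLex x).2 < (ofLex y).2) := Prod.Lex.lt_iff

theorem longRay_le_iff (x y : LongRay) : x ≤ y ↔ (ofLex x).1 < (ofLex y).1 ∨
    ((ofLex x).1 = (ofLex y).1 ∧ (ofLex x).2 ≤ (ofLex y).2) := Prod.Lex.le_iff

theorem longRay_exists_gt (f : ℕ → LongRay) : ∃ q : LongRay, ∀ n, f n < q := by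
  have hs : (⨆ n, (ofLex (f n)).1.1) < Ordinal.omega 1 :=
    Ordinal.iSup_lt_omega_one fun n => (ofLex (f n)).1.2
  refine ⟨toLex (⟨Order.succ (⨆ n, (ofLex (f n)).1.1),
    (Cardinal.isSuccLimit_omega 1).succ_lt hs⟩, ⟨0, by simp⟩), fun n => ?_⟩
  rw [longRay_lt_iff]
  left
  exact Order.lt_succ_of_le (Ordinal.le_iSup (fun n => (ofLex (f n)).1.1) n)

theorem longRay_exists_isGLB (S : Set LongRay) (hS : S.Nonempty) : ∃ a, IsGLB S a := by
  obtain ⟨m, ⟨x, hxS, rfl⟩, hmin⟩ :=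
    WellFounded.has_min (wellFounded_lt (α := {o : Ordinal // o < Ordinal.omega 1}))
      ((fun x : LongRay => (ofLex x).1) '' S) (hS.image _)
  have hmin' : ∀ y ∈ S, (ofLex x).1 ≤ (ofLex y).1 := fun y hy =>
    not_lt.1 (hmin _ ⟨y, hy, rfl⟩)
  let T : Set ℝ := {t | ∃ y ∈ S, (ofLex y).1 = (ofLex x).1 ∧ (ofLex y).2.1 = t}
  have hxT : (ofLex x).2.1 ∈ T := ⟨x, hxS, rfl, rfl⟩
  have hT0 : ∀ t ∈ T, 0 ≤ t := by
    rintro t ⟨y, _, _, rfl⟩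
    exact (ofLex y).2.2.1
  have hTb : BddBelow T := ⟨0, hT0⟩
  have h0 : 0 ≤ sInf T := le_csInf ⟨_, hxT⟩ hT0
  have h1 : sInf T < 1 := (csInf_le hTb hxT).trans_lt (ofLex x).2.2.2
  refine ⟨toLex ((ofLex x).1, ⟨sInf T, h0, h1⟩), fun y hy => ?_, fun z hz => ?_⟩
  · rw [longRay_le_iff]
    rcases (hmin' y hy).lt_or_eq with h | h
    · exact Or.inl h
    · exact Or.inr ⟨h, csInf_le hTb ⟨y, hy, h.symm, rfl⟩⟩
  · rw [longRay_le_iff]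
    rcases (longRay_le_iff _ _).1 (hz hxS) with h | ⟨h, _⟩
    · exact Or.inl h
    · refine Or.inr ⟨h, ?_⟩
      refine le_csInf (a := (ofLex z).2.1) ⟨_, hxT⟩ ?_
      rintro t ⟨y, hy, hyx, rfl⟩
      rcases (longRay_le_iff _ _).1 (hz hy) with h' | ⟨_, h'⟩
      · rw [h, hyx] at h'
        exact absurd h' (lt_irrefl _)
      · exact h'

theorem longRay_isSeqCompact (p : LongRay) : IsSeqCompact {x : LongRay | p ≤ x} := by
  intro f hf
  obtain ⟨g, hg⟩ := exists_increasing_or_nonincreasing_subseq (· ≤ ·) f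
  have key : ∃ a, Filter.Tendsto (f ∘ g) Filter.atTop (nhds a) := by
    rcases hg with hg | hg
    · have hm : Monotone (f ∘ g) := monotone_nat_of_le_succ fun n => hg n (n+1) (Nat.lt_succ_self n)
      obtain ⟨q, hq⟩ := longRay_exists_gt (f ∘ g)
      obtain ⟨a, ha⟩ := longRay_exists_isGLB (upperBounds (Set.range (f ∘ g)))
        ⟨q, by rintro _ ⟨n, rfl⟩; exact (hq n).le⟩
      exact ⟨a, tendsto_atTop_isLUB hm (isGLB_upperBounds.1 ha)⟩
    · have hm : Antitone (f ∘ g) := antitone_nat_of_succ_le fun n =>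
        (not_le.1 (hg n (n+1) (Nat.lt_succ_self n))).le
      obtain ⟨a, ha⟩ := longRay_exists_isGLB (Set.range (f ∘ g)) (Set.range_nonempty _)
      exact ⟨a, tendsto_atTop_isGLB hm ha⟩
  obtain ⟨a, ha⟩ := key
  exact ⟨a, ge_of_tendsto' ha fun n => hf (g n), g, g.strictMono, ha⟩

theorem longRay_not_isCompact (p : LongRay) : ¬ IsCompact {x : LongRay | p ≤ x} := by
  intro h
  obtain ⟨m, hm, hmax⟩ := h.exists_isGreatest ⟨p, le_refl p⟩
  obtain ⟨q, hq⟩ := longRay_exists_gt fun _ => m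
  exact absurd (hmax (le_trans hm (hq 0).le : p ≤ q)) (not_le.2 (hq 0))

/-- For every point `p` of the closed long ray, the closed tail `{x | p ≤ x}` is a
closed, sequentially compact subset which is not compact. Consequently, the closed
long ray is not a ⊠-space: it has a closed sequentially compact subset which fails
to be compact. -/
theorem longRay_tail_closed_seqCompact_not_compact :
    (∀ p : LongRay, IsClosed {x : LongRay | p ≤ x} ∧ IsSeqCompact {x : LongRay | p ≤ x} ∧
      ¬ IsCompact {x : LongRay | p ≤ x}) ∧
    ∃ A : Set LongRay, IsClosed A ∧ IsSeqCompact A ∧ ¬ IsCompact A := by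
  have main : ∀ p : LongRay, IsClosed {x : LongRay | p ≤ x} ∧
      IsSeqCompact {x : LongRay | p ≤ x} ∧ ¬ IsCompact {x : LongRay | p ≤ x} := fun p =>
    ⟨isClosed_Ici, longRay_isSeqCompact p, longRay_not_isCompact p⟩
  obtain ⟨q, _⟩ := longRay_exists_gt fun _ =>
    toLex (⟨0, Ordinal.omega_pos 1⟩, ⟨0, by simp⟩)
  exact ⟨main, _, main q⟩
end

section
/- Every continuous real-valued function on the closed long ray is eventually constant: for every continuous f : ℒ → ℝ there exists a point a ∈ ℒ such that f(x) = f(a) for all x ≥ a. -/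
theorem omega_one_succ_lt {o : Ordinal.{0}} (h : o < Ordinal.omega 1) :
    Order.succ o < Ordinal.omega 1 := by
  rw [← Cardinal.ord_aleph] at h ⊢
  exact (Cardinal.isSuccLimit_ord (Cardinal.aleph0_le_aleph 1)).succ_lt h

theorem omega_seq_sup (u : ℕ → {o : Ordinal.{0} // o < Ordinal.omega 1}) :
    ∃ s, IsLUB (Set.range u) s := by
  have hlt : (⨆ n, (u n).1) < Ordinal.omega 1 :=
    Ordinal.iSup_lt_omega_one (fun n => (u n).2)
  refine ⟨⟨⨆ n, (u n).1, hlt⟩, ?_, ?_⟩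
  · rintro _ ⟨n, rfl⟩
    exact Ordinal.le_iSup (fun n => (u n).1) n
  · intro b hb
    exact Ordinal.iSup_le (fun n => hb ⟨n, rfl⟩)

/-- The point `(α, 0)`. -/
noncomputable def lrPt (α : {o : Ordinal.{0} // o < Ordinal.omega 1}) : LongRay :=
  toLex (α, ⟨0, by simp⟩)

theorem lrPt_le (α : {o : Ordinal.{0} // o < Ordinal.omega 1}) (x : LongRay) :
    lrPt α ≤ x ↔ α ≤ (ofLex x).1 := by
  rw [lrPt, Prod.Lex.le_iff]
  constructor
  · rintro (h | h)
    · exact h.le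
    · exact h.1.le
  · intro h
    rcases h.lt_or_eq with h | h
    · exact Or.inl h
    · exact Or.inr ⟨h, (ofLex x).2.2.1⟩

theorem exists_le_lrPt (x : LongRay) : ∃ β, x ≤ lrPt β := by
  refine ⟨⟨Order.succ (ofLex x).1.1,
    omega_one_succ_lt (ofLex x).1.2⟩, ?_⟩
  rw [lrPt, Prod.Lex.le_iff]
  left
  exact Subtype.mk_lt_mk.2 (Order.lt_succ _)

theorem longRay_cauchy (f : LongRay → ℝ) (hf : Continuous f) (ε : ℝ) (hε : 0 < ε) :
    ∃ α, ∀ x y : LongRay, lrPt α ≤ x → lrPt α ≤ y → dist (f x) (f y) < ε := by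
  by_contra! h
  choose x y hx hy hd using h
  have hb : ∀ α, ∃ β, x α ≤ lrPt β ∧ y α ≤ lrPt β := by
    intro α
    obtain ⟨β, hβ⟩ := exists_le_lrPt (max (x α) (y α))
    exact ⟨β, (le_max_left _ _).trans hβ, (le_max_right _ _).trans hβ⟩
  choose g hgx hgy using hb
  let u : ℕ → {o : Ordinal.{0} // o < Ordinal.omega 1} :=
    fun n => g^[n] ⟨0, Ordinal.omega_pos 1⟩
  have hu : ∀ n, u (n + 1) = g (u n) := fun n => Function.iterate_succ_apply' _ _ _
  obtain ⟨s, hs⟩ := omega_seq_sup u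
  have hmono : Monotone (fun n => lrPt (u n)) := by
    refine monotone_nat_of_le_succ fun n => ?_
    rw [hu]
    exact (hx _).trans (hgx _)
  have hlub : IsLUB (Set.range fun n => lrPt (u n)) (lrPt s) := by
    constructor
    · rintro _ ⟨n, rfl⟩
      exact (lrPt_le _ _).2 (hs.1 ⟨n, rfl⟩)
    · intro b hb
      refine (lrPt_le _ _).2 (hs.2 ?_)
      rintro _ ⟨n, rfl⟩
      exact (lrPt_le _ _).1 (hb ⟨n, rfl⟩)
  have ht := tendsto_atTop_isLUB hmono hlub
  have ht' := (Filter.tendsto_add_atTop_iff_nat 1).2 ht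
  have hxt : Filter.Tendsto (fun n => x (u n)) Filter.atTop (nhds (lrPt s)) :=
    tendsto_of_tendsto_of_tendsto_of_le_of_le ht ht' (fun n => hx _)
      (fun n => by simpa only [hu] using hgx (u n))
  have hyt : Filter.Tendsto (fun n => y (u n)) Filter.atTop (nhds (lrPt s)) :=
    tendsto_of_tendsto_of_tendsto_of_le_of_le ht ht' (fun n => hy _)
      (fun n => by simpa only [hu] using hgy (u n))
  have hdt := ((hf.tendsto _).comp hxt).dist ((hf.tendsto _).comp hyt)
  rw [dist_self] at hdt
  obtain ⟨n, hn⟩ := (hdt.eventually (gt_mem_nhds hε)).exists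
  exact absurd hn (not_lt.2 (hd _))

/-- Every continuous real-valued function on the closed long ray is eventually
constant. -/
theorem longRay_continuous_eventually_constant (f : LongRay → ℝ) (hf : Continuous f) :
    ∃ a : LongRay, ∀ x : LongRay, a ≤ x → f x = f a := by
  have h := fun n : ℕ => longRay_cauchy f hf (1 / ((n : ℝ) + 1)) Nat.one_div_pos_of_nat
  choose u hu using h
  obtain ⟨s, hs⟩ := omega_seq_sup u
  have hle : ∀ n, lrPt (u n) ≤ lrPt s := fun n => (lrPt_le _ _).2 (hs.1 ⟨n, rfl⟩)
  refine ⟨lrPt s, fun x hx => ?_⟩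
  by_contra hne
  obtain ⟨n, hn⟩ := exists_nat_one_div_lt (dist_pos.2 hne)
  exact absurd (hu n x (lrPt s) ((hle n).trans hx) (hle n)) (not_lt.2 hn.le)
end

section
/- Let I be an infinite index set and let ℝ^I carry the product topology. Then every subset of ℝ^I which is discrete in the subspace topology has cardinality at most |I|, and there exists a discrete subset of ℝ^I of cardinality exactly |I| (for instance the set of unit vectors). -/
universe u

/-- For an infinite index set `I`, every discrete subset of the product space `ℝ^I`
has cardinality at most `|I|`, and there is a discrete subset of cardinality
exactly `|I|`. -/
theorem discrete_subsets_pi_real (I : Type u) [Infinite I] :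
    (∀ S : Set (I → ℝ), DiscreteTopology S → Cardinal.mk S ≤ Cardinal.mk I) ∧
    (∃ S : Set (I → ℝ), DiscreteTopology S ∧ Cardinal.mk S = Cardinal.mk I) := by
  classical
  constructor
  · intro S hS
    obtain ⟨b, hbc, -, hb⟩ := TopologicalSpace.exists_countable_basis ℝ
    have key : ∀ s : S, ∃ L : Finset (I × b),
        (∀ p ∈ L, (s : I → ℝ) p.1 ∈ (p.2 : Set ℝ)) ∧
        ∀ t : S, (∀ p ∈ L, (t : I → ℝ) p.1 ∈ (p.2 : Set ℝ)) → t = s := by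
      intro s
      obtain ⟨U, hU, hUs⟩ := isOpen_induced_iff.1 (isOpen_discrete ({s} : Set S))
      have hsU : (s : I → ℝ) ∈ U := by
        have : s ∈ (Subtype.val ⁻¹' U : Set S) := by rw [hUs]; rfl
        exact this
      obtain ⟨V, ⟨W, F, hW, rfl⟩, hsV, hVU⟩ :=
        (isTopologicalBasis_pi (fun _ : I => hb)).exists_subset_of_mem_open hsU hU
      refine ⟨F.attach.image (fun i => (i.1, ⟨W i.1, hW i.1 i.2⟩)), ?_, ?_⟩
      · intro p hp
        obtain ⟨i, -, rfl⟩ := Finset.mem_image.1 hp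
        exact hsV i.1 i.2
      · intro t ht
        have h1 : (t : I → ℝ) ∈ U := hVU fun i hi =>
          ht (i, ⟨W i, hW i hi⟩) (Finset.mem_image.2 ⟨⟨i, hi⟩, Finset.mem_attach _ _, rfl⟩)
        have h2 : t ∈ (Subtype.val ⁻¹' U : Set S) := h1
        rw [hUs] at h2
        exact h2
    choose L hL hL' using key
    have hinj : Function.Injective L := by
      intro s t h
      exact hL' t s (h ▸ hL s)
    have : Countable b := hbc.to_subtype
    obtain ⟨e, he⟩ := exists_injective_nat b
    have hm : Function.Injective (Prod.map id e : I × b → I × ℕ) :=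
      Function.injective_id.prodMap he
    calc Cardinal.mk S ≤ Cardinal.mk (Finset (I × b)) := Cardinal.mk_le_of_injective hinj
      _ ≤ Cardinal.mk (Finset (I × ℕ)) :=
          Cardinal.mk_le_of_injective (Finset.map_injective ⟨_, hm⟩)
      _ = Cardinal.mk I := by
          rw [Cardinal.mk_finset_of_infinite, Cardinal.mk_prod]
          simp
  · have hinj : Function.Injective (fun i : I => (Pi.single i 1 : I → ℝ)) := by
      intro i j h
      by_contra hij
      have := congrFun h i
      simp [Pi.single_apply, hij] at this
    refine ⟨Set.range (fun i : I => (Pi.single i 1 : I → ℝ)), ?_, Cardinal.mk_range_eq _ hinj⟩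
    rw [discreteTopology_iff_isOpen_singleton]
    rintro ⟨_, i, rfl⟩
    refine isOpen_induced_iff.2 ⟨{x | (0 : ℝ) < x i},
      isOpen_lt continuous_const (continuous_apply i), ?_⟩
    ext ⟨_, j, rfl⟩
    by_cases hij : i = j
    · subst hij; simp
    · have : ¬ j = i := fun h => hij h.symm
      simp only [Set.mem_preimage, Set.mem_ofPred_eq, Set.mem_singleton_iff, Subtype.mk.injEq]
      simp only [Pi.single_apply, hij, if_false, lt_irrefl, false_iff]
      exact fun h => this (hinj (congrArg Subtype.val h))
end

section
/- Every connected d-dimensional Hausdorff topological manifold M admits an atlas of at most continuum cardinality: there is a family of at most 2^ℵ₀ open subsets of M, each homeomorphic to an open subset of ℝ^d, which covers M. -/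
universe u

/-- Every connected `d`-dimensional Hausdorff topological manifold admits an atlas of
at most continuum cardinality: a family of at most `2 ^ ℵ₀` open sets, each
homeomorphic to an open subset of `ℝ^d`, covering `M`. -/
theorem connected_manifold_atlas_card_le_continuum {d : ℕ} (M : Type u)
    [TopologicalSpace M] [T2Space M] [ConnectedSpace M]
    (hM : ∀ x : M, ∃ U : Set M, IsOpen U ∧ x ∈ U ∧
      ∃ V : Set (Fin d → ℝ), IsOpen V ∧ Nonempty (U ≃ₜ V)) :
    ∃ 𝒞 : Set (Set M), Cardinal.mk 𝒞 ≤ Cardinal.continuum ∧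
      (∀ U ∈ 𝒞, IsOpen U ∧ ∃ V : Set (Fin d → ℝ), IsOpen V ∧ Nonempty (↥U ≃ₜ ↥V)) ∧
      ⋃₀ 𝒞 = Set.univ := by
  classical
  choose U hU hxU V hV hUV using hM
  have e : ∀ x, U x ≃ₜ V x := fun x => (hUV x).some
  obtain ⟨x₀⟩ : Nonempty M := inferInstance
  -- first countability
  have hfc : FirstCountableTopology M := by
    refine ⟨fun x => ?_⟩
    have : FirstCountableTopology (U x) := (e x).isInducing.firstCountableTopology
    rw [← (hU x).isOpenEmbedding_subtypeVal.map_nhds_eq ⟨x, hxU x⟩]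
    infer_instance
  -- closure of a point under charts and sequential limits
  let β : Option (Option (Fin d → ℝ)) → Type := fun a => a.elim Empty (fun _ => ℕ)
  let step : (Σ a, β a → M) → M := fun p =>
    match p with
    | ⟨none, _⟩ => x₀
    | ⟨some none, s⟩ =>
      if h : ∃ x, Filter.Tendsto (fun n : ℕ => s n) Filter.atTop (nhds x) then h.choose else x₀
    | ⟨some (some v), s⟩ =>
      if h : v ∈ V (s (0 : ℕ)) then ((e (s (0 : ℕ))).symm ⟨v, h⟩ : M) else x₀
  let ev : WType β → M := WType.elim M step
  have hcard : Cardinal.mk (WType β) ≤ Cardinal.continuum := by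
    apply WType.cardinalMk_le_of_le'
    have hα : Cardinal.mk (Option (Option (Fin d → ℝ))) ≤ Cardinal.continuum := by
      have h1 : Cardinal.mk (Fin d → ℝ) ≤ Cardinal.continuum := by
        simp only [Cardinal.mk_pi, Cardinal.prod_const, Cardinal.mk_real, Cardinal.lift_id]
        refine (Cardinal.power_le_power_left Cardinal.continuum_ne_zero
          (Cardinal.mk_le_aleph0 (α := Fin d))).trans ?_
        simp
      rw [Cardinal.mk_option, Cardinal.mk_option, add_assoc]
      refine Cardinal.add_le_of_le Cardinal.aleph0_le_continuum h1 ?_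
      norm_num
      exact (Cardinal.nat_lt_continuum 2).le
    refine (Cardinal.sum_le_sum _ (fun _ => Cardinal.continuum) ?_).trans ?_
    · intro a
      have : Cardinal.mk (β a) ≤ Cardinal.aleph0 := by
        rcases a with _ | a
        · exact Cardinal.mk_le_aleph0 (α := Empty)
        · exact Cardinal.mk_le_aleph0 (α := ℕ)
      refine (Cardinal.power_le_power_left Cardinal.continuum_ne_zero
          (Cardinal.lift_le_aleph0.2 this)).trans ?_
      simp
    · simp only [Cardinal.sum_const, Cardinal.lift_id]
      exact Cardinal.mul_le_of_le Cardinal.aleph0_le_continuum hα le_rfl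
  have hopen : IsOpen (Set.range ev) := by
    rw [isOpen_iff_mem_nhds]
    rintro _ ⟨w, rfl⟩
    filter_upwards [(hU (ev w)).mem_nhds (hxU _)] with y hy
    refine ⟨WType.mk (some (some (e (ev w) ⟨y, hy⟩ : Fin d → ℝ))) (fun _ => w), ?_⟩
    change (if h : (e (ev w) ⟨y, hy⟩ : Fin d → ℝ) ∈ V (ev w) then
      ((e (ev w)).symm ⟨_, h⟩ : M) else x₀) = y
    simp
  have hclosed : IsClosed (Set.range ev) := by
    rw [← closure_subset_iff_isClosed]
    intro y hy
    obtain ⟨s, hs, hlim⟩ := mem_closure_iff_seq_limit.1 hy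
    choose w hw using hs
    refine ⟨WType.mk (some none) (fun n => w n), ?_⟩
    have hws : (fun n => ev (w n)) = s := funext hw
    have hex : ∃ x, Filter.Tendsto (fun n => ev (w n)) Filter.atTop (nhds x) :=
      ⟨y, hws ▸ hlim⟩
    change (if h : ∃ x, Filter.Tendsto (fun n => ev (w n)) Filter.atTop (nhds x) then
      h.choose else x₀) = y
    rw [dif_pos hex]
    exact tendsto_nhds_unique hex.choose_spec (hws ▸ hlim)
  have huniv : Set.range ev = Set.univ :=
    IsClopen.eq_univ ⟨hclosed, hopen⟩ ⟨_, WType.mk none Empty.elim, rfl⟩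
  refine ⟨Set.range (fun w => U (ev w)), ?_, ?_, ?_⟩
  · have h := Cardinal.mk_range_le_lift (f := fun w => U (ev w))
    have h2 := Cardinal.lift_le.{u}.2 hcard
    simpa using h.trans h2
  · rintro _ ⟨w, rfl⟩
    exact ⟨hU _, V _, hV _, hUV _⟩
  · refine Set.eq_univ_of_forall fun y => ?_
    obtain ⟨w, rfl⟩ : y ∈ Set.range ev := huniv ▸ Set.mem_univ y
    exact ⟨_, ⟨w, rfl⟩, hxU _⟩
end

section
/- Every connected d-dimensional Hausdorff topological manifold M admits an open cover 𝒞 with |𝒞| ≤ 2^ℵ₀ such that each member of 𝒞 is a separable open subset of M and 𝒞 is stable under finite unions (the union of any two members of 𝒞 is again a member of 𝒞). -/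
universe u

namespace SepCover
open Filter Topology Cardinal

/-- Arities: one constant and continuum many operations of countable arity. -/
abbrev Ar : Option ℝ → Type
  | none => Empty
  | some _ => ℕ

lemma mk_W_le : #(WType Ar) ≤ #ℝ := by
  refine WType.cardinalMk_le_of_le' ?_
  refine (Cardinal.sum_le_mk_mul_iSup _).trans ?_
  have h : ∀ a : Option ℝ, #ℝ ^ #(Ar a) ≤ #ℝ := by
    rintro (_ | r)
    · simpa [Ar, Cardinal.mk_real] using
        Cardinal.one_lt_aleph0.le.trans Cardinal.aleph0_le_continuum
    · simp [Ar, Cardinal.mk_real]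
  calc _ ≤ #(Option ℝ) * #ℝ := by
        gcongr
        exact ciSup_le' fun a => by simpa using h a
    _ ≤ #ℝ := by
        rw [Cardinal.mk_option, Cardinal.mk_real,
          Cardinal.add_one_eq Cardinal.aleph0_le_continuum, Cardinal.continuum_mul_self]

/-- Evaluation of a term. -/
noncomputable def ev {M : Type u} (x₀ : M) (L : (ℕ → M) → M) (e : M → ℝ → M) : WType Ar → M
  | ⟨none, _⟩ => x₀
  | ⟨some r, f⟩ => e (L fun n => ev x₀ L e (f n)) r

lemma exists_surj {M : Type u} [TopologicalSpace M] [T2Space M] [ConnectedSpace M]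
    [FirstCountableTopology M] (U : M → Set M) (hU : ∀ x, IsOpen (U x)) (hx : ∀ x, x ∈ U x)
    (e : M → ℝ → M) (he : ∀ x, U x ⊆ Set.range (e x)) : ∃ g : ℝ → M, Function.Surjective g := by
  classical
  obtain ⟨x₀⟩ : Nonempty M := inferInstance
  let L : (ℕ → M) → M := fun s => if h : ∃ y, Tendsto s atTop (𝓝 y) then h.choose else x₀
  have hL : ∀ s y, Tendsto s atTop (𝓝 y) → L s = y := by
    intro s y h
    have h' : ∃ y, Tendsto s atTop (𝓝 y) := ⟨y, h⟩
    simp only [L, dif_pos h']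
    exact tendsto_nhds_unique h'.choose_spec h
  let A := Set.range (ev x₀ L e)
  have key : ∀ s : ℕ → M, (∀ n, s n ∈ A) → ∀ y, Tendsto s atTop (𝓝 y) → U y ⊆ A := by
    intro s hs y hy z hz
    choose f hf using hs
    obtain ⟨r, hr⟩ := he y hz
    refine ⟨WType.mk (some r) f, ?_⟩
    rw [ev]
    simp only [hf]
    rw [hL s y hy, hr]
  have hopen : IsOpen A := by
    rw [isOpen_iff_mem_nhds]
    intro x hxA
    exact mem_of_superset ((hU x).mem_nhds (hx x))
      (key (fun _ => x) (fun _ => hxA) x tendsto_const_nhds)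
  have hclosed : IsClosed A := by
    apply IsSeqClosed.isClosed
    intro s y hs hy
    exact key s hs y hy (hx y)
  have huniv : A = Set.univ :=
    IsClopen.eq_univ ⟨hclosed, hopen⟩ ⟨x₀, WType.mk none Empty.elim, by rw [ev]⟩
  obtain ⟨i⟩ := Cardinal.le_def _ _ |>.1 mk_W_le
  have : Nonempty (WType Ar) := ⟨WType.mk none Empty.elim⟩
  exact ⟨ev x₀ L e ∘ Function.invFun i,
    (Set.range_eq_univ.1 huniv).comp (Function.invFun_surjective i.injective)⟩

end SepCover

/-- Every connected `d`-dimensional Hausdorff topological manifold admits an open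
cover `𝒞` of at most continuum cardinality consisting of separable open sets, which
is stable under (binary, hence finite) unions. -/
theorem connected_manifold_separable_cover {d : ℕ} (M : Type u)
    [TopologicalSpace M] [T2Space M] [ConnectedSpace M]
    (hM : ∀ x : M, ∃ U : Set M, IsOpen U ∧ x ∈ U ∧
      ∃ V : Set (Fin d → ℝ), IsOpen V ∧ Nonempty (U ≃ₜ V)) :
    ∃ 𝒞 : Set (Set M), Cardinal.mk 𝒞 ≤ Cardinal.continuum ∧
      (∀ U ∈ 𝒞, IsOpen U ∧ TopologicalSpace.IsSeparable U) ∧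
      (∀ U ∈ 𝒞, ∀ V ∈ 𝒞, U ∪ V ∈ 𝒞) ∧
      ⋃₀ 𝒞 = Set.univ := by
  classical
  choose U hU hx V hV hUV using hM
  have hsc : ∀ x, SecondCountableTopology (U x) := fun x =>
    (hUV x).some.secondCountableTopology
  have hfc : FirstCountableTopology M := by
    constructor
    intro x
    have := hsc x
    rw [← map_nhds_subtype_coe_eq_nhds (hx x) ((hU x).mem_nhds (hx x))]
    infer_instance
  have hsep : ∀ x, TopologicalSpace.IsSeparable (U x) := fun x => by
    have := hsc x
    exact TopologicalSpace.IsSeparable.of_subtype (U x)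
  have hcard : Cardinal.mk (Fin d → ℝ) ≤ Cardinal.mk ℝ := by
    simp only [← Cardinal.power_def, Cardinal.mk_real, Cardinal.mk_fin]
    exact (Cardinal.power_le_power_left Cardinal.continuum_ne_zero
      (Cardinal.natCast_le_aleph0)).trans Cardinal.continuum_power_aleph0.le
  obtain ⟨j⟩ := (Cardinal.le_def _ _).1 hcard
  have he : ∀ x, ∃ e : ℝ → M, U x ⊆ Set.range e := by
    intro x
    let k : U x → ℝ := fun y => j ((hUV x).some y : Fin d → ℝ)
    have hk : Function.Injective k := fun a b h =>
      (hUV x).some.injective (Subtype.ext (j.injective h))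
    have : Nonempty (U x) := ⟨⟨x, hx x⟩⟩
    refine ⟨fun r => (Function.invFun k r : U x), fun y hy => ⟨k ⟨y, hy⟩, ?_⟩⟩
    simp [Function.leftInverse_invFun hk ⟨y, hy⟩]
  choose e he using he
  obtain ⟨g, hg⟩ := SepCover.exists_surj U hU hx e he
  refine ⟨Set.range fun s : Finset ℝ => ⋃ r ∈ s, U (g r), ?_, ?_, ?_, ?_⟩
  · have h := Cardinal.mk_range_le_lift (f := fun s : Finset ℝ => ⋃ r ∈ s, U (g r))
    simpa [Cardinal.mk_real] using h
  · rintro _ ⟨s, rfl⟩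
    refine ⟨isOpen_biUnion fun r _ => hU _, ?_⟩
    have : Countable {r // r ∈ s} := inferInstance
    have h := TopologicalSpace.IsSeparable.iUnion (fun r : {r // r ∈ s} => hsep (g r))
    simpa [Set.iUnion_subtype] using h
  · rintro _ ⟨s, rfl⟩ _ ⟨t, rfl⟩
    exact ⟨s ∪ t, Finset.set_biUnion_union s t _⟩
  · refine Set.eq_univ_of_forall fun x => ?_
    obtain ⟨r, rfl⟩ := hg x
    exact ⟨_, ⟨{r}, rfl⟩, by simpa using hx (g r)⟩
end

section
/- Let M be a connected d-dimensional Hausdorff topological manifold. Then the set of all continuous compactly supported functions f : M → ℝ has cardinality at most 2^ℵ₀. -/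
universe u

/-- Arity of the nodes of the trees used to enumerate the points of the manifold. -/
def treeArity (d : ℕ) : Option (Option (Fin d → ℝ)) → Type
  | none => Empty
  | some _ => ℕ

theorem mk_tree_le (d : ℕ) : Cardinal.mk (WType (treeArity d)) ≤ Cardinal.continuum := by
  apply WType.cardinalMk_le_of_le
  have h1 : ∀ a, Cardinal.continuum ^ Cardinal.mk (treeArity d a) ≤ Cardinal.continuum := by
    intro a
    cases a with
    | none =>
      have : Cardinal.mk (treeArity d none) = 0 := Cardinal.mk_eq_zero Empty
      rw [this, Cardinal.power_zero]
      exact Cardinal.one_le_aleph0.trans Cardinal.aleph0_le_continuum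
    | some v =>
      have : Cardinal.mk (treeArity d (some v)) = Cardinal.aleph0 := Cardinal.mk_nat
      rw [this, Cardinal.continuum_power_aleph0]
  have h2 : Cardinal.mk (Fin d → ℝ) ≤ Cardinal.continuum := by
    rw [← Cardinal.power_def, Cardinal.mk_real, Cardinal.mk_fin]
    exact Cardinal.power_nat_le Cardinal.aleph0_le_continuum
  have h3 : Cardinal.mk (Option (Option (Fin d → ℝ))) ≤ Cardinal.continuum := by
    rw [Cardinal.mk_option, Cardinal.mk_option]
    have h1c : (1 : Cardinal.{0}) ≤ Cardinal.continuum :=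
      Cardinal.one_le_aleph0.trans Cardinal.aleph0_le_continuum
    exact Cardinal.add_le_of_le Cardinal.aleph0_le_continuum
      (Cardinal.add_le_of_le Cardinal.aleph0_le_continuum h2 h1c) h1c
  calc _ ≤ Cardinal.sum (fun _ : Option (Option (Fin d → ℝ)) => Cardinal.continuum.{0}) :=
        Cardinal.sum_le_sum _ _ h1
    _ = Cardinal.mk (Option (Option (Fin d → ℝ))) * Cardinal.continuum := by
        rw [Cardinal.sum_const']
    _ ≤ Cardinal.continuum * Cardinal.continuum := mul_le_mul_left h3 _
    _ = _ := Cardinal.continuum_mul_self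

open Classical in
/-- Evaluation of trees: nodes apply charts or take limits. -/
noncomputable def treeEval {d : ℕ} {M : Type u} [TopologicalSpace M] (x0 : M)
    (c : M → (Fin d → ℝ) → M) : WType (treeArity d) → M
  | ⟨none, _⟩ => x0
  | ⟨some (some v), s⟩ => c (treeEval x0 c (s (0 : ℕ))) v
  | ⟨some none, s⟩ =>
    if h : ∃ y, Filter.Tendsto (fun n : ℕ => treeEval x0 c (s n)) Filter.atTop (nhds y) then
      h.choose else x0

theorem manifold_card_le {d : ℕ} (M : Type u)
    [TopologicalSpace M] [T2Space M] [ConnectedSpace M] [FirstCountableTopology M]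
    (U : M → Set M) (hU : ∀ x, IsOpen (U x)) (hx : ∀ x, x ∈ U x)
    (V : M → Set (Fin d → ℝ)) (e : ∀ x, U x ≃ₜ V x) :
    Cardinal.mk M ≤ Cardinal.continuum := by
  classical
  obtain ⟨x0⟩ := (inferInstance : Nonempty M)
  let c : M → (Fin d → ℝ) → M := fun x v => if h : v ∈ V x then (e x).symm ⟨v, h⟩ else x0
  let E := treeEval x0 c
  have hE1 : ∀ t v, E ⟨some (some v), fun _ : ℕ => t⟩ = c (E t) v := by
    intro t v; rfl
  have hE2 : ∀ (s : ℕ → WType (treeArity d)) y,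
      Filter.Tendsto (fun n => E (s n)) Filter.atTop (nhds y) → E ⟨some none, s⟩ = y := by
    intro s y h
    have h' : ∃ y, Filter.Tendsto (fun n : ℕ => treeEval x0 c (s n)) Filter.atTop (nhds y) :=
      ⟨y, h⟩
    have : E ⟨some none, s⟩ = h'.choose := dif_pos h'
    rw [this]
    exact tendsto_nhds_unique h'.choose_spec h
  have hopen : IsOpen (Set.range E) := by
    rw [isOpen_iff_forall_mem_open]
    rintro _ ⟨t, rfl⟩
    refine ⟨U (E t), ?_, hU _, hx _⟩
    intro y hy
    refine ⟨⟨some (some (e (E t) ⟨y, hy⟩).1), fun _ : ℕ => t⟩, ?_⟩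
    rw [hE1]
    simp [c]
  have hclosed : IsClosed (Set.range E) := by
    apply isClosed_of_closure_subset
    intro y hy
    obtain ⟨s, hs, hlim⟩ := mem_closure_iff_seq_limit.1 hy
    choose t ht using hs
    refine ⟨⟨some none, t⟩, hE2 t y ?_⟩
    simpa only [ht] using hlim
  have huniv : Set.range E = Set.univ :=
    IsClopen.eq_univ ⟨hclosed, hopen⟩ ⟨E ⟨none, fun x : Empty => x.elim⟩, Set.mem_range_self _⟩
  have hsurj : Function.Surjective (fun t : ULift.{u} (WType (treeArity d)) => E t.down) := by
    intro y
    obtain ⟨t, ht⟩ := Set.range_eq_univ.1 huniv y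
    exact ⟨⟨t⟩, ht⟩
  refine (Cardinal.mk_le_of_surjective hsurj).trans ?_
  rw [Cardinal.mk_uLift, Cardinal.lift_le_continuum]
  exact mk_tree_le d

/-- On a connected `d`-dimensional Hausdorff topological manifold, the set of
continuous compactly supported real-valued functions has cardinality at most the
continuum. -/
theorem card_continuous_compactly_supported_le_continuum {d : ℕ} (M : Type u)
    [TopologicalSpace M] [T2Space M] [ConnectedSpace M]
    (hM : ∀ x : M, ∃ U : Set M, IsOpen U ∧ x ∈ U ∧
      ∃ V : Set (Fin d → ℝ), IsOpen V ∧ Nonempty (U ≃ₜ V)) :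
    Cardinal.mk {f : M → ℝ // Continuous f ∧ HasCompactSupport f} ≤
      Cardinal.continuum := by
  classical
  choose U hU hx V hV he using hM
  have e : ∀ x, U x ≃ₜ V x := fun x => (he x).some
  have hsc : ∀ x, SecondCountableTopology (U x) := fun x => (e x).secondCountableTopology
  have : FirstCountableTopology M := by
    refine ⟨fun x => ?_⟩
    have h := (hU x).isOpenEmbedding_subtypeVal.map_nhds_eq ⟨x, hx x⟩
    have h2 := hsc x
    change Filter.IsCountablyGenerated (nhds ((⟨x, hx x⟩ : U x) : M))
    rw [← h]
    infer_instance
  have hcard := manifold_card_le M U hU hx V e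
  have hne : ∀ x, Nonempty (U x) := fun x => ⟨⟨x, hx x⟩⟩
  let D : ∀ x, ℕ → U x := fun x => TopologicalSpace.denseSeq (U x)
  have hD : ∀ x, DenseRange (D x) := fun x => TopologicalSpace.denseRange_denseSeq (U x)
  have hcov : ∀ f : {f : M → ℝ // Continuous f ∧ HasCompactSupport f},
      ∃ p : ℕ → M, tsupport f.1 ⊆ ⋃ n, U (p n) := by
    intro f
    obtain ⟨t, ht⟩ := f.2.2.isCompact.elim_finite_subcover U hU
      (fun x _ => Set.mem_iUnion.2 ⟨x, hx x⟩)
    obtain ⟨x0⟩ := (inferInstance : Nonempty M)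
    obtain ⟨p, hp⟩ := (insert x0 t).countable_toSet.exists_eq_range ⟨x0, by simp⟩
    refine ⟨p, fun y hy => ?_⟩
    obtain ⟨i, hi, hyi⟩ := Set.mem_iUnion₂.1 (ht hy)
    have : i ∈ Set.range p := by rw [← hp]; simp [hi]
    obtain ⟨n, rfl⟩ := this
    exact Set.mem_iUnion.2 ⟨n, hyi⟩
  choose p hp using hcov
  let Φ : {f : M → ℝ // Continuous f ∧ HasCompactSupport f} → (ℕ → M) × (ℕ → ℕ → ℝ) :=
    fun f => (p f, fun m n => f.1 (D (p f m) n))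
  have hinj : Function.Injective Φ := by
    intro f g hfg
    have h1 : p f = p g := congrArg Prod.fst hfg
    have h2 : ∀ m n, f.1 (D (p f m) n) = g.1 (D (p f m) n) := by
      intro m n
      have h3 : f.1 (D (p f m) n) = g.1 (D (p g m) n) :=
        congrFun (congrFun (congrArg Prod.snd hfg) m) n
      rw [← h1] at h3
      exact h3
    apply Subtype.ext
    funext y
    by_cases hy : ∃ m, y ∈ U (p f m)
    · obtain ⟨m, hm⟩ := hy
      have := (hD (p f m)).equalizer (f.2.1.comp continuous_subtype_val)
        (g.2.1.comp continuous_subtype_val) (funext fun n => h2 m n)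
      exact congrFun this ⟨y, hm⟩
    · have hf : y ∉ tsupport f.1 := fun h => hy (Set.mem_iUnion.1 (hp f h))
      have hg : y ∉ tsupport g.1 := fun h => hy (by
        rw [h1]; exact Set.mem_iUnion.1 (hp g h))
      rw [image_eq_zero_of_notMem_tsupport hf, image_eq_zero_of_notMem_tsupport hg]
  refine (Cardinal.mk_le_of_injective hinj).trans ?_
  have k1 : Cardinal.mk (ℕ → M) ≤ Cardinal.continuum := by
    rw [Cardinal.mk_arrow, Cardinal.mk_nat, Cardinal.lift_aleph0, Cardinal.lift_uzero]
    exact (Cardinal.power_le_power_right hcard).trans Cardinal.continuum_power_aleph0.le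
  have k2 : Cardinal.mk (ℕ → ℕ → ℝ) ≤ Cardinal.continuum := by
    simp [Cardinal.mk_real]
  rw [Cardinal.mk_prod, Cardinal.lift_uzero]
  refine (mul_le_mul' k1 (Cardinal.lift_le_continuum.2 k2)).trans ?_
  exact Cardinal.continuum_mul_self.le
end

section
/- Let M be a connected d-dimensional Hausdorff topological manifold. Then there exist an index set I with |I| ≤ 2^ℵ₀ and a topological embedding of M into the product space ℝ^I. -/
universe u

open Topology Filter Cardinal

namespace ManifoldEmb

/-- Arities: one constant, and one `ℕ`-ary operation for each vector. -/
def Ar (d : ℕ) : Option (Fin d → ℝ) → Type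
  | none => Empty
  | some _ => ℕ

lemma card_W (d : ℕ) : #(WType (Ar d)) ≤ continuum := by
  apply WType.cardinalMk_le_of_le
  calc (Cardinal.sum fun a : Option (Fin d → ℝ) => continuum ^ #(Ar d a))
      ≤ Cardinal.sum fun _ : Option (Fin d → ℝ) => continuum := by
        apply Cardinal.sum_le_sum
        rintro (_ | a)
        · have : #(Ar d none) = 0 := Cardinal.mk_eq_zero Empty
          rw [this, power_zero]
          exact (Cardinal.nat_lt_continuum 1).le.trans' (by simp)
        · have : #(Ar d (some a)) = ℵ₀ := Cardinal.mk_nat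
          rw [this, continuum_power_aleph0]
    _ ≤ continuum := by
        have h : #(Option (Fin d → ℝ)) ≤ continuum := by
          rw [Cardinal.mk_option]
          have : #(Fin d → ℝ) ≤ continuum := by
            have h1 : #(Fin d → ℝ) = continuum ^ (d : Cardinal) := by
              simp [Cardinal.mk_real]
            rw [h1]
            calc (continuum : Cardinal.{0}) ^ (d : Cardinal) ≤ continuum ^ ℵ₀ :=
                  Cardinal.power_le_power_left continuum_ne_zero (Cardinal.natCast_le_aleph0)
              _ = continuum := continuum_power_aleph0
          refine add_le_of_le aleph0_le_continuum this ?_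
          exact (Cardinal.nat_lt_continuum 1).le.trans' (by simp)
        rw [Cardinal.sum_const']
        exact (mul_le_mul_left h _).trans_eq continuum_mul_self

lemma card_le {d : ℕ} (M : Type u)
    [TopologicalSpace M] [T2Space M] [ConnectedSpace M] [FirstCountableTopology M]
    (hM : ∀ x : M, ∃ U : Set M, IsOpen U ∧ x ∈ U ∧
      ∃ e : (Fin d → ℝ) → M, U ⊆ Set.range e) : #M ≤ continuum := by
  classical
  choose U hU hx e he using hM
  obtain ⟨x0⟩ : Nonempty M := inferInstance
  let ev : WType (Ar d) → M := fun w => WType.elim M (fun p => match p with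
    | ⟨none, _⟩ => x0
    | ⟨some c, s⟩ => e (@limUnder _ _ _ ⟨x0⟩ (atTop : Filter ℕ) s) c) w
  have hev : ∀ (s : ℕ → WType (Ar d)) (x : M), Tendsto (fun n => ev (s n)) atTop (𝓝 x) →
      U x ⊆ Set.range ev := by
    intro s x hs y hy
    obtain ⟨c, rfl⟩ := he x hy
    refine ⟨WType.mk (some c) s, ?_⟩
    have := @Tendsto.limUnder_eq _ _ _ _ _ _ _ _ hs
    change e (@limUnder _ _ _ ⟨x0⟩ (atTop : Filter ℕ) (fun n => ev (s n))) c = _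
    rw [this]
  have hcl : IsClopen (Set.range ev) := by
    constructor
    · apply IsSeqClosed.isClosed
      intro f x hf hfx
      choose s hs using hf
      exact hev s x (by simpa [hs] using hfx) (hx x)
    · rw [isOpen_iff_mem_nhds]
      rintro _ ⟨w, rfl⟩
      exact mem_of_superset ((hU _).mem_nhds (hx _)) (hev (fun _ => w) _ tendsto_const_nhds)
  have hsurj : Function.Surjective ev := by
    rw [← Set.range_eq_univ]
    exact hcl.eq_univ ⟨x0, WType.mk none (fun x => Empty.elim x), rfl⟩
  have := Cardinal.lift_mk_le_lift_mk_of_surjective hsurj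
  have h2 := Cardinal.lift_le.{u}.2 (card_W d)
  simpa using this.trans h2

end ManifoldEmb

/-- Every connected `d`-dimensional Hausdorff topological manifold admits a
topological embedding into a product space `ℝ^I` with `|I| ≤ 2 ^ ℵ₀`. -/
theorem connected_manifold_embeds_into_pi_real {d : ℕ} (M : Type u)
    [TopologicalSpace M] [T2Space M] [ConnectedSpace M]
    (hM : ∀ x : M, ∃ U : Set M, IsOpen U ∧ x ∈ U ∧
      ∃ V : Set (Fin d → ℝ), IsOpen V ∧ Nonempty (U ≃ₜ V)) :
    ∃ (I : Type u) (φ : M → I → ℝ),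
      Cardinal.mk I ≤ Cardinal.continuum ∧ Topology.IsEmbedding φ := by
  classical
  have : FirstCountableTopology M := by
    constructor
    intro x
    obtain ⟨U, hU, hx, V, hV, ⟨e⟩⟩ := hM x
    have : FirstCountableTopology U := e.isInducing.firstCountableTopology
    rw [← map_nhds_subtype_coe_eq_nhds (p := (· ∈ U)) hx (hU.mem_nhds hx)]
    have : (𝓝 (⟨x, hx⟩ : U)).IsCountablyGenerated := inferInstance
    exact Filter.map.isCountablyGenerated _ _
  have : WeaklyLocallyCompactSpace M := by
    constructor
    intro x
    obtain ⟨U, hU, hx, V, hV, ⟨e⟩⟩ := hM x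
    have : LocallyCompactSpace V := hV.locallyCompactSpace
    have : LocallyCompactSpace U := e.isOpenEmbedding.locallyCompactSpace
    obtain ⟨K, hK, hKx⟩ := exists_compact_mem_nhds (⟨x, hx⟩ : U)
    refine ⟨Subtype.val '' K, hK.image continuous_subtype_val, ?_⟩
    rw [← map_nhds_subtype_coe_eq_nhds (p := (· ∈ U)) hx (hU.mem_nhds hx)]
    exact image_mem_map hKx
  have hcard : #M ≤ continuum := by
    apply ManifoldEmb.card_le (d := d)
    intro x
    obtain ⟨U, hU, hx, V, hV, ⟨e⟩⟩ := hM x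
    refine ⟨U, hU, hx, fun c => if h : c ∈ V then (e.symm ⟨c, h⟩ : M) else x, ?_⟩
    intro y hy
    refine ⟨e ⟨y, hy⟩, ?_⟩
    simp
  have hf : ∀ (x : M) (W : Set M), W ∈ 𝓝 x →
      ∃ f : C(M, ℝ), f x = 1 ∧ ∀ y, y ∉ W → f y = 0 := by
    intro x W hW
    obtain ⟨O, hOW, hO, hxO⟩ := mem_nhds_iff.1 hW
    obtain ⟨f, h1, h0, -⟩ := exists_continuous_one_zero_of_isCompact
      (isCompact_singleton (x := x)) hO.isClosed_compl (by simpa using hxO)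
    exact ⟨f, h1 rfl, fun y hy => h0 (fun h => hy (hOW h))⟩
  choose B hB using fun x : M => (𝓝 x).exists_antitone_basis
  choose f hf1 hf0 using fun p : M × ℕ => hf p.1 (B p.1 p.2) ((hB p.1).1.mem_of_mem trivial)
  refine ⟨M × ℕ, fun y p => f p y, ?_, ?_⟩
  · rw [Cardinal.mk_prod]
    simpa using (mul_le_mul_left hcard ℵ₀).trans_eq continuum_mul_aleph0
  · have hcont : Continuous (fun (y : M) (p : M × ℕ) => f p y) := by fun_prop
    have hind : IsInducing (fun (y : M) (p : M × ℕ) => f p y) := by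
      rw [isInducing_iff_nhds]
      intro x
      refine le_antisymm hcont.continuousAt.le_comap ?_
      rw [(hB x).1.ge_iff]
      intro n _
      refine ⟨{g | g (x, n) ≠ 0}, ?_, ?_⟩
      · apply (isOpen_ne_fun (continuous_apply _) continuous_const).mem_nhds
        simp [hf1 (x, n)]
      · intro y hy
        by_contra h
        exact hy (hf0 (x, n) y h)
    exact hind.isEmbedding
end

section
/- Let M be a d-dimensional Hausdorff topological manifold and let c(M) denote the cardinality of the set of connected components of M. Then there exist an index set I with |I| ≤ max(c(M), 2^ℵ₀) and a topological embedding of M into the product space ℝ^I. -/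
universe u

open Topology Filter Cardinal

section Aux

variable {d : ℕ} {M : Type u} [TopologicalSpace M]

/-- Points have neighbourhoods homeomorphic to open subsets of `ℝ^d`. -/
def LocEuc (d : ℕ) (M : Type u) [TopologicalSpace M] : Prop :=
  ∀ x : M, ∃ U : Set M, IsOpen U ∧ x ∈ U ∧
      ∃ V : Set (Fin d → ℝ), IsOpen V ∧ Nonempty (U ≃ₜ V)

theorem LocEuc.firstCountable (hM : LocEuc d M) : FirstCountableTopology M := by
  refine ⟨fun x => ?_⟩
  obtain ⟨U, hU, hx, V, hV, ⟨e⟩⟩ := hM x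
  have : FirstCountableTopology U := e.isInducing.firstCountableTopology
  rw [← hU.isOpenEmbedding_subtypeVal.map_nhds_eq ⟨x, hx⟩]
  infer_instance

theorem LocEuc.weaklyLocallyCompact (hM : LocEuc d M) : WeaklyLocallyCompactSpace M := by
  refine ⟨fun x => ?_⟩
  obtain ⟨U, hU, hx, V, hV, ⟨e⟩⟩ := hM x
  have : LocallyCompactSpace V := hV.locallyCompactSpace
  have : LocallyCompactSpace U := e.isOpenEmbedding.locallyCompactSpace
  obtain ⟨K, hK, hKx⟩ := exists_compact_mem_nhds (⟨x, hx⟩ : U)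
  refine ⟨Subtype.val '' K, hK.image continuous_subtype_val, ?_⟩
  rw [← hU.isOpenEmbedding_subtypeVal.map_nhds_eq ⟨x, hx⟩]
  exact image_mem_map hKx

/-- Node labels of the trees: a base point, a limit, or a chart point. -/
abbrev Lab (d : ℕ) := Option (Option (Fin d → ℝ))

/-- Arity of the nodes. -/
def Ar (d : ℕ) : Lab d → Type
  | none => Empty
  | some _ => ℕ

theorem mk_trees_le (d : ℕ) : #(WType (Ar d)) ≤ 𝔠 := by
  apply WType.cardinalMk_le_of_le
  calc (Cardinal.sum fun a => 𝔠 ^ #(Ar d a)) ≤ Cardinal.sum fun a : Lab d => 𝔠 := by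
        apply Cardinal.sum_le_sum
        rintro (_ | a)
        · simp [Ar, Cardinal.one_le_iff_ne_zero, Cardinal.continuum_ne_zero]
        · simp [Ar]
    _ = #(Lab d) * 𝔠 := by simp
    _ ≤ 𝔠 * 𝔠 := by
        gcongr
        have h : #(Fin d → ℝ) ≤ 𝔠 := by
          rw [← Cardinal.power_def, Cardinal.mk_real, Cardinal.mk_fin]
          exact Cardinal.power_nat_le Cardinal.aleph0_le_continuum
        rw [Cardinal.mk_option, Cardinal.mk_option]
        have h1 : (1 : Cardinal) ≤ 𝔠 := Cardinal.one_le_aleph0.trans Cardinal.aleph0_le_continuum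
        exact Cardinal.add_le_of_le Cardinal.aleph0_le_continuum
          (Cardinal.add_le_of_le Cardinal.aleph0_le_continuum h h1) h1
    _ = 𝔠 := Cardinal.continuum_mul_self

theorem LocEuc.mk_component_le [T2Space M] (hM : LocEuc d M) (x₀ : M) :
    #(connectedComponent x₀) ≤ 𝔠 := by
  classical
  have := hM.firstCountable
  choose U hU hx V hV he using hM
  let e : ∀ x, U x ≃ₜ V x := fun x => (he x).some
  let step : (Σ a : Lab d, (Ar d a → M)) → M := fun p =>
    match p with
    | ⟨none, _⟩ => x₀
    | ⟨some none, f⟩ =>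
      if h : ∃ y, Tendsto (fun n : ℕ => f n) atTop (𝓝 y) then h.choose else x₀
    | ⟨some (some v), f⟩ =>
      if h : v ∈ V (f (0 : ℕ)) then ((e (f (0 : ℕ))).symm ⟨v, h⟩ : M) else x₀
  let ev : WType (Ar d) → M := WType.elim M step
  have h0 : x₀ ∈ Set.range ev := ⟨WType.mk none (fun z => Empty.elim z), rfl⟩
  have hopen : IsOpen (Set.range ev) := by
    rw [isOpen_iff_mem_nhds]
    rintro _ ⟨t, rfl⟩
    refine mem_of_superset ((hU (ev t)).mem_nhds (hx _)) fun y hy => ?_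
    refine ⟨WType.mk (some (some (e (ev t) ⟨y, hy⟩ : Fin d → ℝ))) (fun _ => t), ?_⟩
    change (if h : (e (ev t) ⟨y, hy⟩ : Fin d → ℝ) ∈ V (ev t) then
      ((e (ev t)).symm ⟨_, h⟩ : M) else x₀) = y
    rw [dif_pos (Subtype.coe_prop _)]
    simp
  have hclosed : IsClosed (Set.range ev) := by
    apply IsSeqClosed.isClosed
    intro s y hs hy
    choose t ht using hs
    refine ⟨WType.mk (some none) (fun n : ℕ => t n), ?_⟩
    change (if h : ∃ y, Tendsto (fun n : ℕ => ev (t n)) atTop (𝓝 y) then h.choose else x₀) = y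
    have hy' : Tendsto (fun n : ℕ => ev (t n)) atTop (𝓝 y) := by simpa only [ht] using hy
    have hex : ∃ y, Tendsto (fun n : ℕ => ev (t n)) atTop (𝓝 y) := ⟨y, hy'⟩
    rw [dif_pos hex]
    exact tendsto_nhds_unique hex.choose_spec hy'
  have hsub : connectedComponent x₀ ⊆ Set.range ev :=
    IsClopen.connectedComponent_subset ⟨hclosed, hopen⟩ h0
  refine (Cardinal.mk_le_mk_of_subset hsub).trans ?_
  have h := Cardinal.mk_range_le_lift (f := ev)
  have h2 := Cardinal.lift_le.{u}.2 (mk_trees_le d)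
  simpa using h.trans h2

theorem LocEuc.mk_le [T2Space M] (hM : LocEuc d M) :
    #M ≤ max #(ConnectedComponents M) 𝔠 := by
  let q : M → ConnectedComponents M := fun x => (x : ConnectedComponents M)
  calc #M = #(Σ c, {x // q x = c}) := Cardinal.mk_congr (Equiv.sigmaFiberEquiv q).symm
    _ = Cardinal.sum fun c => #{x // q x = c} := Cardinal.mk_sigma _
    _ ≤ Cardinal.sum fun _ : ConnectedComponents M => 𝔠 := by
        apply Cardinal.sum_le_sum
        intro c
        obtain ⟨x, rfl⟩ := ConnectedComponents.surjective_coe c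
        refine le_trans (le_of_eq ?_) (hM.mk_component_le x)
        have := connectedComponents_preimage_singleton (x := x)
        rw [← this]
        rfl
    _ = #(ConnectedComponents M) * 𝔠 := by simp
    _ ≤ max (max #(ConnectedComponents M) 𝔠) ℵ₀ := Cardinal.mul_le_max _ _
    _ = _ := max_eq_left (Cardinal.aleph0_le_continuum.trans (le_max_right _ _))

theorem LocEuc.exists_embedding [T2Space M] (hM : LocEuc d M) :
    ∃ φ : M → (M × ℕ) → ℝ, IsEmbedding φ := by
  have := hM.firstCountable
  have := hM.weaklyLocallyCompact
  have hb : ∀ x : M, ∃ B : ℕ → Set M, (𝓝 x).HasAntitoneBasis B := fun x =>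
    (𝓝 x).exists_antitone_basis
  choose B hB using hb
  have hf : ∀ p : M × ℕ, ∃ f : M → ℝ, Continuous f ∧ f p.1 = 0 ∧
      ∀ y, y ∉ interior (B p.1 p.2) → f y = 1 := by
    rintro ⟨x, n⟩
    have hmem : x ∈ interior (B x n) :=
      mem_interior_iff_mem_nhds.2 ((hB x).1.mem_of_mem trivial)
    obtain ⟨f, hx, h1, -⟩ := exists_continuous_zero_one_of_isCompact (isCompact_singleton (x := x))
      (isOpen_interior (s := B x n)).isClosed_compl
      (Set.disjoint_singleton_left.2 fun h => h hmem)
    exact ⟨f, f.continuous, hx rfl, fun y hy => h1 hy⟩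
  choose f hfc hf0 hf1 using hf
  refine ⟨fun x p => f p x, ?_⟩
  have hc : Continuous fun (x : M) (p : M × ℕ) => f p x := continuous_pi fun p => hfc p
  refine IsInducing.isEmbedding (isInducing_iff_nhds.2 fun x => le_antisymm ?_ ?_)
  · exact map_le_iff_le_comap.1 hc.continuousAt
  · rw [(hB x).1.ge_iff]
    intro n _
    refine ⟨{g | g (x, n) < 1}, ?_, ?_⟩
    · exact (isOpen_lt (continuous_apply _) continuous_const).mem_nhds (by simp [hf0 (x, n)])
    · intro y hy
      by_contra hcon
      have := hf1 (x, n) y (fun h => hcon (interior_subset h))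
      simp [this] at hy

end Aux

/-- Every `d`-dimensional Hausdorff topological manifold `M` admits a topological
embedding into a product space `ℝ^I` with `|I| ≤ max (c M) (2 ^ ℵ₀)`, where `c M`
is the number of connected components of `M`. -/
theorem manifold_embeds_into_pi_real {d : ℕ} (M : Type u) [TopologicalSpace M]
    [T2Space M]
    (hM : ∀ x : M, ∃ U : Set M, IsOpen U ∧ x ∈ U ∧
      ∃ V : Set (Fin d → ℝ), IsOpen V ∧ Nonempty (U ≃ₜ V)) :
    ∃ (I : Type u) (φ : M → I → ℝ),
      Cardinal.mk I ≤ max (Cardinal.mk (ConnectedComponents M)) Cardinal.continuum ∧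
      Topology.IsEmbedding φ := by
  have hM' : LocEuc d M := hM
  obtain ⟨φ, hφ⟩ := hM'.exists_embedding
  refine ⟨M × ℕ, φ, ?_, hφ⟩
  have h : ℵ₀ ≤ max #(ConnectedComponents M) 𝔠 :=
    Cardinal.aleph0_le_continuum.trans (le_max_right _ _)
  rw [Cardinal.mk_prod]
  simp only [Cardinal.lift_uzero, Cardinal.mk_nat, Cardinal.lift_aleph0]
  exact Cardinal.mul_le_of_le h hM'.mk_le h
end

section
/- Let X be a locally connected topological space, let I be an infinite index set, and suppose there exists a topological embedding of X into the product space ℝ^I. Then the cardinality of the set of connected components of X is at most |I|. -/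
universe u v

/-- Around each point of an open set in `ℝ^I` there is a rational box coded by a finset. -/
theorem exists_code {I : Type v} (V : Set (I → ℝ)) (hV : IsOpen V) (f : I → ℝ) (hf : f ∈ V) :
    ∃ s : Finset (I × ℚ × ℚ), (∀ t ∈ s, (t.2.1 : ℝ) < f t.1 ∧ f t.1 < t.2.2) ∧
      ∀ g : I → ℝ, (∀ t ∈ s, (t.2.1 : ℝ) < g t.1 ∧ g t.1 < t.2.2) → g ∈ V := by
  classical
  obtain ⟨F, w, hw, hsub⟩ := isOpen_pi_iff.1 hV f hf
  have key : ∀ i : I, ∃ r : ℚ × ℚ, i ∈ F →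
      ((r.1 : ℝ) < f i ∧ f i < r.2) ∧ ∀ y : ℝ, (r.1 : ℝ) < y → y < r.2 → y ∈ w i := by
    intro i
    by_cases hi : i ∈ F
    · obtain ⟨ho, hm⟩ := hw i hi
      obtain ⟨ε, hε, hb⟩ := Metric.isOpen_iff.1 ho _ hm
      obtain ⟨p, hp1, hp2⟩ := exists_rat_btwn (show f i - ε < f i by linarith)
      obtain ⟨q, hq1, hq2⟩ := exists_rat_btwn (show f i < f i + ε by linarith)
      refine ⟨(p, q), fun _ => ⟨⟨hp2, hq1⟩, fun y h1 h2 => hb ?_⟩⟩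
      rw [Real.ball_eq_Ioo]
      exact ⟨hp1.trans h1, h2.trans hq2⟩
    · exact ⟨(0, 0), fun h => absurd h hi⟩
  choose r hr using key
  refine ⟨F.image fun i => (i, r i), ?_, ?_⟩
  · intro t ht
    obtain ⟨i, hi, rfl⟩ := Finset.mem_image.1 ht
    exact (hr i hi).1
  · intro g hg
    apply hsub
    intro i hi
    have := hg (i, r i) (Finset.mem_image_of_mem _ hi)
    exact (hr i hi).2 _ this.1 this.2

/-- If a locally connected topological space `X` embeds topologically into `ℝ^I`
for an infinite index set `I`, then the number of connected components of `X` is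
at most `|I|`. -/
theorem card_connectedComponents_le_of_embedding (X : Type u) (I : Type v)
    [TopologicalSpace X] [LocallyConnectedSpace X] [Infinite I]
    (φ : X → I → ℝ) (hφ : Topology.IsEmbedding φ) :
    Cardinal.lift.{v} (Cardinal.mk (ConnectedComponents X)) ≤
      Cardinal.lift.{u} (Cardinal.mk I) := by
  have h : ∀ c : ConnectedComponents X, ∃ (x : X) (s : Finset (I × ℚ × ℚ)),
      (∀ t ∈ s, (t.2.1 : ℝ) < φ x t.1 ∧ φ x t.1 < t.2.2) ∧
      ∀ y : X, (∀ t ∈ s, (t.2.1 : ℝ) < φ y t.1 ∧ φ y t.1 < t.2.2) →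
        (y : ConnectedComponents X) = c := by
    intro c
    obtain ⟨x, rfl⟩ := ConnectedComponents.surjective_coe c
    obtain ⟨V, hV, hVx⟩ := hφ.isInducing.isOpen_iff.1 (isOpen_connectedComponent (x := x))
    have hx : φ x ∈ V := by
      change x ∈ φ ⁻¹' V
      rw [hVx]; exact mem_connectedComponent
    obtain ⟨s, h1, h2⟩ := exists_code V hV _ hx
    refine ⟨x, s, h1, fun y hy => ?_⟩
    have : y ∈ φ ⁻¹' V := h2 _ hy
    rw [hVx] at this
    exact ConnectedComponents.coe_eq_coe'.2 this
  choose x s h1 h2 using h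
  have inj : Function.Injective s := by
    intro c d hcd
    rw [← h2 c (x c) (h1 c)]
    exact h2 d (x c) (hcd ▸ h1 c)
  have := Cardinal.mk_le_of_injective (Function.Injective.comp (Equiv.ulift.{u}.symm.injective)
    (inj.comp Equiv.ulift.{v}.injective))
  rw [Cardinal.mk_uLift, Cardinal.mk_uLift] at this
  refine this.trans (Cardinal.lift_le.2 ?_)
  rw [Cardinal.mk_finset_of_infinite, Cardinal.mk_prod]
  simp
end
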